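/- arXiv:2005.02695 — 2 statements merged into one kernel-verified Lean document; each statement's English description precedes it below -/
import Mathlib

section
/- Let E ≠ {0} be a z-invariant linear subspace of Hol(𝔻) with T(E) ⊂ E such that I_E − λT|_E : E → E is bijective for every λ ∈ 𝔻, let λ ∈ 𝔻, let M be a nontrivial linear subspace of E, and let π : E → E/M be the canonical surjection. Then: (i) λ ∉ Z(M) if and only if the linear map π ∘ (S|_E − λI_E) : E → E/M is onto; (ii) M has the division property at λ if and only if Ker(π ∘ (S|_E − λI_E)) ⊂ M, and in this case π ∘ (S|_E − λI_E) is onto and the map U_λ : E/M → E/M defined by U_λ(π(S f − λf)) = π(f) for f ∈ E is well-defined and onto. -/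
/-!
On `E` the operator `S - λ` is multiplication by `z - λ`. The identity `(I - λT)⁻¹ T f = f_λ` shows
that `E` itself has the division property at `λ`, so the range of `S - λ` on `E` is the hyperplane
`{f ∈ E | f(λ) = 0}`. Hence `π ∘ (S - λ)` is onto exactly when `M` is not contained in this
hyperplane, which is (i). Since dividing by `z - λ` inverts `S - λ`, the division property of `M`
says that `(S - λ) f ∈ M` forces `f ∈ M`, which is the first part of (ii). Finally, a nonzero `M`
with the division property at `λ` cannot vanish identically at `λ`, for otherwise all of its
elements could be divided by `z - λ` indefinitely; so `π ∘ (S - λ)` is onto and `π` factors through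
it.
-/

noncomputable section

open Metric Set Filter Topology
open scoped Classical

/-- Functions holomorphic on the open unit disc, normalized to vanish outside it.
This is our model of `Hol(𝔻)`. -/
def HolDisc : Set (ℂ → ℂ) :=
  {f | DifferentiableOn ℂ f (Metric.ball (0:ℂ) 1) ∧ ∀ z ∉ Metric.ball (0:ℂ) 1, f z = 0}

/-- The constant function `1` of `Hol(𝔻)` (normalized to vanish outside the disc). -/
def oneD : ℂ → ℂ := fun z => if z ∈ Metric.ball (0:ℂ) 1 then 1 else 0

/-- The shift `S`, `(Sf)(z) = z f(z)`, as a linear map. -/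
def shiftL : (ℂ → ℂ) →ₗ[ℂ] (ℂ → ℂ) where
  toFun f := fun z => z * f z
  map_add' f g := by funext z; simp [mul_add]
  map_smul' c f := by funext z; simp [smul_eq_mul]; ring

/-- Division: `f_λ(z) = (f(z) - f(λ))/(z - λ)` for `z ≠ λ`, `f_λ(λ) = f'(λ)`,
normalized to vanish outside the disc.  `fdivB 0` is the backward shift `T`. -/
def fdivB (lam : ℂ) (f : ℂ → ℂ) : ℂ → ℂ := fun z =>
  if z ∈ Metric.ball (0:ℂ) 1 then
    (if z = lam then deriv f lam else (f z - f lam) / (z - lam))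
  else 0

/-- The reflected model of the shift `S⁻` on `H₀(ℂ ∖ 𝔻̄)`: a function `h` on `{|ζ|>1}`
vanishing at `∞` is represented by `k(w) = h(1/w)` (holomorphic on `𝔻`, `k 0 = 0`);
`S⁻` corresponds to `k ↦ (k(z) - k(0))/z - k'(0)·1`. -/
def negShiftF (k : ℂ → ℂ) : ℂ → ℂ := fun z => fdivB 0 k z - deriv k 0 * oneD z

/-- `n`-th Taylor coefficient at the origin. -/
def tCoeff (n : ℕ) (f : ℂ → ℂ) : ℂ := iteratedDeriv n f 0 / (Nat.factorial n)

section LinearAlgebra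

theorem exists_comp_eq_of_ker_le_ker {R V W X : Type*} [Ring R] [AddCommGroup V] [AddCommGroup W]
    [AddCommGroup X] [Module R V] [Module R W] [Module R X] {f : V →ₗ[R] W} {g : V →ₗ[R] X}
    (hf : Function.Surjective f) (h : LinearMap.ker f ≤ LinearMap.ker g) :
    ∃ u : W →ₗ[R] X, u ∘ₗ f = g := by
  refine ⟨(LinearMap.ker f).liftQ g h ∘ₗ (f.quotKerEquivOfSurjective hf).symm.toLinearMap, ?_⟩
  ext v
  have hv : (f.quotKerEquivOfSurjective hf).symm (f v) = (LinearMap.ker f).mkQ v :=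
    (LinearEquiv.symm_apply_eq _).2 rfl
  simp [hv]

theorem surjective_mkQ_comp_iff_of_range_eq_ker {K V W : Type*} [DivisionRing K] [AddCommGroup V]
    [AddCommGroup W] [Module K V] [Module K W] {A : W →ₗ[K] V} {ε : V →ₗ[K] K} (hε : ε ≠ 0)
    (hA : LinearMap.range A = LinearMap.ker ε) (p : Submodule K V) :
    Function.Surjective (p.mkQ ∘ₗ A) ↔ ∃ v ∈ p, ε v ≠ 0 := by
  have hcoatom : IsCoatom (LinearMap.ker ε) :=
    LinearMap.isCoatom_ker_of_surjective (LinearMap.surjective hε)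
  rw [← LinearMap.range_eq_top, LinearMap.range_comp, hA, Submodule.map_mkQ_eq_top, sup_comm,
    ← hcoatom.lt_iff, left_lt_sup, SetLike.not_le_iff_exists]
  simp only [LinearMap.mem_ker, ne_eq]

end LinearAlgebra

section Division

variable {lam : ℂ} {f g : ℂ → ℂ}

theorem sub_mul_fdivB {z : ℂ} (hz : z ∈ ball (0 : ℂ) 1) :
    (z - lam) * fdivB lam f z = f z - f lam := by
  rcases eq_or_ne z lam with rfl | hne
  · simp
  · rw [fdivB, if_pos hz, if_neg hne, mul_div_cancel₀ _ (sub_ne_zero.2 hne)]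

theorem fdivB_eq_of_sub_mul_eq (hlam : lam ∈ ball (0 : ℂ) 1) (hg : g ∈ HolDisc)
    (h : ∀ z ∈ ball (0 : ℂ) 1, (z - lam) * g z = f z - f lam) : fdivB lam f = g := by
  have hball : ball (0 : ℂ) 1 ∈ 𝓝 lam := isOpen_ball.mem_nhds hlam
  have hquot : ∀ z ∈ ball (0 : ℂ) 1, z ≠ lam → (f z - f lam) / (z - lam) = g z := fun z hz hne => by
    rw [← h z hz, mul_div_cancel_left₀ _ (sub_ne_zero.2 hne)]
  have hderiv : HasDerivAt f (g lam) lam := by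
    have hcont : ContinuousAt g lam := hg.1.continuousOn.continuousAt hball
    refine hasDerivAt_iff_tendsto_slope.2 ((hcont.tendsto.mono_left nhdsWithin_le_nhds).congr' ?_)
    filter_upwards [self_mem_nhdsWithin, mem_nhdsWithin_of_mem_nhds hball] with z hne hz
    rw [slope_def_field, hquot z hz hne]
  funext z
  unfold fdivB
  split_ifs with hz hzlam
  · rw [hzlam, hderiv.deriv]
  · exact hquot z hz hzlam
  · exact (hg.2 z hz).symm

theorem fdivB_eq_of_resolvent_eq (hlam : lam ∈ ball (0 : ℂ) 1) (hg : g ∈ HolDisc)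
    (h : g - lam • fdivB 0 g = fdivB 0 f) : fdivB lam f = g := by
  have hmul : ∀ z ∈ ball (0 : ℂ) 1, (z - lam) * g z = f z - f 0 - lam * g 0 := fun z hz => by
    have hz_eq : g z - lam * fdivB 0 g z = fdivB 0 f z := congrFun h z
    have hTg := sub_mul_fdivB (lam := 0) (f := g) hz
    have hTf := sub_mul_fdivB (lam := 0) (f := f) hz
    linear_combination z * hz_eq + lam * hTg + hTf
  refine fdivB_eq_of_sub_mul_eq hlam hg fun z hz => ?_
  linear_combination hmul z hz - hmul lam hlam

theorem eq_zero_of_analyticOrderAt_eq_top (hlam : lam ∈ ball (0 : ℂ) 1) (hf : f ∈ HolDisc)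
    (h : analyticOrderAt f lam = ⊤) : f = 0 := by
  have hzero : EqOn f 0 (ball (0 : ℂ) 1) :=
    (hf.1.analyticOnNhd isOpen_ball).eqOn_zero_of_preconnected_of_eventuallyEq_zero
      (convex_ball 0 1).isPreconnected hlam (analyticOrderAt_eq_top.1 h)
  funext z
  by_cases hz : z ∈ ball (0 : ℂ) 1
  · exact hzero hz
  · exact hf.2 z hz

theorem analyticOrderAt_eq_fdivB_add_one (hlam : lam ∈ ball (0 : ℂ) 1)
    (hdiv : AnalyticAt ℂ (fdivB lam f) lam) (hf : f lam = 0) :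
    analyticOrderAt f lam = analyticOrderAt (fdivB lam f) lam + 1 := by
  have hfactor : f =ᶠ[𝓝 lam] (fun z => z - lam) * fdivB lam f := by
    filter_upwards [isOpen_ball.mem_nhds hlam] with z hz
    rw [Pi.mul_apply, sub_mul_fdivB hz, hf, sub_zero]
  rw [analyticOrderAt_congr hfactor, analyticOrderAt_mul (by fun_prop) hdiv,
    analyticOrderAt_id_sub_const_self, add_comm]

end Division

/-- `M` has the division property at `lam`: the quotient `f_λ` lies in `M` for every `f ∈ M` with
`f(λ) = 0`. -/
def HasDivisionProperty (M : Submodule ℂ (ℂ → ℂ)) (lam : ℂ) : Prop :=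
  ∀ f ∈ M, f lam = 0 → fdivB lam f ∈ M

section DivisionProperty

variable {E M : Submodule ℂ (ℂ → ℂ)} {lam : ℂ}

theorem hasDivisionProperty_of_surjective_resolvent (hE : (E : Set (ℂ → ℂ)) ⊆ HolDisc)
    (T : ↥E →ₗ[ℂ] ↥E) (hT : ∀ f : ↥E, (↑(T f) : ℂ → ℂ) = fdivB 0 ↑f)
    (hlam : lam ∈ ball (0 : ℂ) 1)
    (hsurj : Function.Surjective ((LinearMap.id : ↥E →ₗ[ℂ] ↥E) - lam • T)) :
    HasDivisionProperty E lam := by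
  intro f hf _
  obtain ⟨g, hg⟩ := hsurj (T ⟨f, hf⟩)
  have hresolvent : (g : ℂ → ℂ) - lam • fdivB 0 g = fdivB 0 f := by
    simpa [hT] using congrArg Subtype.val hg
  exact fdivB_eq_of_resolvent_eq hlam (hE g.2) hresolvent ▸ g.2

theorem HasDivisionProperty.exists_apply_ne_zero (hdiv : HasDivisionProperty M lam)
    (hM : (M : Set (ℂ → ℂ)) ⊆ HolDisc) (hM0 : M ≠ ⊥) (hlam : lam ∈ ball (0 : ℂ) 1) :
    ∃ f ∈ M, f lam ≠ 0 := by
  by_contra! hvanish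
  have hle : ∀ n : ℕ, ∀ f ∈ M, n ≤ analyticOrderAt f lam := by
    intro n
    induction n with
    | zero => simp
    | succ n ih =>
      intro f hf
      have hquot : fdivB lam f ∈ M := hdiv f hf (hvanish f hf)
      have han : AnalyticAt ℂ (fdivB lam f) lam := (hM hquot).1.analyticOnNhd isOpen_ball lam hlam
      rw [analyticOrderAt_eq_fdivB_add_one hlam han (hvanish f hf), Nat.cast_succ]
      gcongr
      exact ih _ hquot
  obtain ⟨f, hf, hf0⟩ := M.exists_mem_ne_zero_of_ne_bot hM0
  exact hf0 (eq_zero_of_analyticOrderAt_eq_top hlam (hM hf)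
    (ENat.eq_top_iff_forall_ge.2 fun n => hle n f hf))

end DivisionProperty

/-- The operator `S|_E - λ I_E` on a `z`-invariant subspace `E`. -/
def shiftSub {E : Submodule ℂ (ℂ → ℂ)} (hES : ∀ f ∈ E, shiftL f ∈ E) (lam : ℂ) : ↥E →ₗ[ℂ] ↥E :=
  shiftL.restrict hES - lam • LinearMap.id

section ShiftSub

variable {E M : Submodule ℂ (ℂ → ℂ)} {lam : ℂ} (hES : ∀ f ∈ E, shiftL f ∈ E)

theorem shiftSub_apply (f : ↥E) (z : ℂ) :
    (shiftSub hES lam f : ℂ → ℂ) z = (z - lam) * (f : ℂ → ℂ) z := by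
  simp [shiftSub, shiftL, sub_mul]

theorem fdivB_shiftSub (hE : (E : Set (ℂ → ℂ)) ⊆ HolDisc) (hlam : lam ∈ ball (0 : ℂ) 1) (f : ↥E) :
    fdivB lam (shiftSub hES lam f) = f :=
  fdivB_eq_of_sub_mul_eq hlam (hE f.2) fun z _ => by simp [shiftSub_apply]

theorem shiftSub_fdivB (hE : (E : Set (ℂ → ℂ)) ⊆ HolDisc) {f : ℂ → ℂ} (hf : f ∈ E)
    (hf0 : f lam = 0) (hquot : fdivB lam f ∈ E) :
    shiftSub hES lam ⟨fdivB lam f, hquot⟩ = ⟨f, hf⟩ := by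
  ext z
  rw [shiftSub_apply]
  by_cases hz : z ∈ ball (0 : ℂ) 1
  · simp [sub_mul_fdivB hz, hf0]
  · simp [(hE hf).2 z hz, (hE hquot).2 z hz]

theorem range_shiftSub (hE : (E : Set (ℂ → ℂ)) ⊆ HolDisc) (hdiv : HasDivisionProperty E lam) :
    LinearMap.range (shiftSub hES lam) = LinearMap.ker (LinearMap.proj lam ∘ₗ E.subtype) := by
  ext f
  constructor
  · rintro ⟨g, rfl⟩
    simp [shiftSub_apply]
  · exact fun hf => ⟨_, shiftSub_fdivB hES hE f.2 hf (hdiv f f.2 hf)⟩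

theorem surjective_mkQ_comp_shiftSub_iff (hE : (E : Set (ℂ → ℂ)) ⊆ HolDisc) (hE0 : E ≠ ⊥)
    (hlam : lam ∈ ball (0 : ℂ) 1) (hdiv : HasDivisionProperty E lam) (hME : M ≤ E) :
    Function.Surjective ((M.comap E.subtype).mkQ ∘ₗ shiftSub hES lam) ↔ ∃ f ∈ M, f lam ≠ 0 := by
  have heval : (LinearMap.proj lam ∘ₗ E.subtype : ↥E →ₗ[ℂ] ℂ) ≠ 0 := by
    obtain ⟨f, hf, hf0⟩ := hdiv.exists_apply_ne_zero hE hE0 hlam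
    exact fun h => hf0 (LinearMap.congr_fun h ⟨f, hf⟩)
  rw [surjective_mkQ_comp_iff_of_range_eq_ker heval (range_shiftSub hES hE hdiv)]
  exact ⟨fun ⟨f, hf, hf0⟩ => ⟨f, hf, hf0⟩, fun ⟨f, hf, hf0⟩ => ⟨⟨f, hME hf⟩, hf, hf0⟩⟩

theorem hasDivisionProperty_iff_ker_le (hE : (E : Set (ℂ → ℂ)) ⊆ HolDisc)
    (hlam : lam ∈ ball (0 : ℂ) 1) (hdiv : HasDivisionProperty E lam) (hME : M ≤ E) :
    HasDivisionProperty M lam ↔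
      LinearMap.ker ((M.comap E.subtype).mkQ ∘ₗ shiftSub hES lam) ≤ M.comap E.subtype := by
  rw [LinearMap.ker_comp, Submodule.ker_mkQ]
  constructor
  · intro hM g hg
    have hquot := hM _ hg (by simp [shiftSub_apply])
    rwa [Submodule.subtype_apply, fdivB_shiftSub hES hE hlam] at hquot
  · intro hle f hf hf0
    refine hle (x := ⟨fdivB lam f, hdiv f (hME hf) hf0⟩) ?_
    rw [Submodule.mem_comap, shiftSub_fdivB hES hE (hME hf) hf0]
    exact hf

end ShiftSub

theorem statement2_general
    (E M : Submodule ℂ (ℂ → ℂ))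
    (hEhol : (E : Set (ℂ → ℂ)) ⊆ HolDisc)
    (hES : ∀ f ∈ E, shiftL f ∈ E)
    (lam : ℂ) (hlam : lam ∈ ball (0 : ℂ) 1)
    (hEdiv : HasDivisionProperty E lam)
    (hME : M ≤ E) (hM0 : M ≠ ⊥) :
    ((∃ f ∈ M, f lam ≠ 0) ↔
      Function.Surjective ((M.comap E.subtype).mkQ ∘ₗ shiftSub hES lam))
    ∧ (HasDivisionProperty M lam ↔
        LinearMap.ker ((M.comap E.subtype).mkQ ∘ₗ shiftSub hES lam) ≤ M.comap E.subtype)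
    ∧ (HasDivisionProperty M lam →
        Function.Surjective ((M.comap E.subtype).mkQ ∘ₗ shiftSub hES lam)
        ∧ ∃ U : (↥E ⧸ M.comap E.subtype) →ₗ[ℂ] (↥E ⧸ M.comap E.subtype),
            (∀ f : ↥E, U ((M.comap E.subtype).mkQ (shiftSub hES lam f)) =
              (M.comap E.subtype).mkQ f)
            ∧ Function.Surjective U) := by
  have hE0 : E ≠ ⊥ := ne_bot_of_le_ne_bot hM0 hME
  have hsurj_iff := surjective_mkQ_comp_shiftSub_iff hES hEhol hE0 hlam hEdiv hME
  have hker_iff := hasDivisionProperty_iff_ker_le hES hEhol hlam hEdiv hME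
  refine ⟨hsurj_iff.symm, hker_iff, fun hMdiv => ?_⟩
  have hsurj := hsurj_iff.2 (hMdiv.exists_apply_ne_zero (Subset.trans hME hEhol) hM0 hlam)
  obtain ⟨U, hU⟩ := exists_comp_eq_of_ker_le_ker hsurj
    ((hker_iff.1 hMdiv).trans_eq (M.comap E.subtype).ker_mkQ.symm)
  refine ⟨hsurj, U, LinearMap.congr_fun hU, ?_⟩
  have hUsurj : Function.Surjective (U ∘ₗ (M.comap E.subtype).mkQ ∘ₗ shiftSub hES lam) := by
    rw [hU]
    exact (M.comap E.subtype).mkQ_surjective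
  exact Function.Surjective.of_comp hUsurj

/-- (Proposition 2.5 (i)-(ii)) -/
theorem statement2
    (E M : Submodule ℂ (ℂ → ℂ))
    (hEhol : (E : Set (ℂ → ℂ)) ⊆ HolDisc) (hE0 : E ≠ ⊥)
    (hES : ∀ f ∈ E, shiftL f ∈ E)
    (TE : ↥E →ₗ[ℂ] ↥E) (hTE : ∀ f : ↥E, (↑(TE f) : ℂ → ℂ) = fdivB 0 ↑f)
    (hbij : ∀ μ ∈ Metric.ball (0:ℂ) 1,
      Function.Bijective ((LinearMap.id : ↥E →ₗ[ℂ] ↥E) - μ • TE))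
    (lam : ℂ) (hlam : lam ∈ Metric.ball (0:ℂ) 1)
    (hME : M ≤ E) (hM0 : M ≠ ⊥) (hMne : M ≠ E) :
    -- (i) : λ ∉ Z(M) iff π ∘ (S|E - λ) is onto
    ((∃ f ∈ M, f lam ≠ 0) ↔
      Function.Surjective
        ((M.comap E.subtype).mkQ ∘ₗ
          (shiftL.restrict hES - lam • (LinearMap.id : ↥E →ₗ[ℂ] ↥E))))
    -- (ii) first part : division property at λ iff Ker(π ∘ (S|E - λ)) ⊆ M
    ∧ ((∀ f ∈ M, f lam = 0 → fdivB lam f ∈ M) ↔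
        LinearMap.ker ((M.comap E.subtype).mkQ ∘ₗ
          (shiftL.restrict hES - lam • (LinearMap.id : ↥E →ₗ[ℂ] ↥E))) ≤ M.comap E.subtype)
    -- (ii) second part : in that case π ∘ (S|E - λ) is onto and U_λ is well defined and onto
    ∧ ((∀ f ∈ M, f lam = 0 → fdivB lam f ∈ M) →
        Function.Surjective
          ((M.comap E.subtype).mkQ ∘ₗ
            (shiftL.restrict hES - lam • (LinearMap.id : ↥E →ₗ[ℂ] ↥E)))
        ∧ ∃ U : (↥E ⧸ M.comap E.subtype) →ₗ[ℂ] (↥E ⧸ M.comap E.subtype),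
            (∀ f : ↥E,
              U ((M.comap E.subtype).mkQ (shiftL.restrict hES f - lam • f)) =
                (M.comap E.subtype).mkQ f)
            ∧ Function.Surjective U) := by
  exact statement2_general E M hEhol hES lam hlam
    (hasDivisionProperty_of_surjective_resolvent hEhol TE hTE hlam (hbij lam hlam).2) hME hM0
end
end

section
/- Let E ∈ 𝓔 and let M ≠ {0} be a closed linear subspace of E. Then M has the division property if and only if the following two conditions hold: (i) Z(M) = ∅; (ii) the quotient space M/(M ∩ S(M)) has dimension 1. -/
noncomputable section

open Metric Set Filter Topology
open scoped Classical

/-!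
The resolvent of the backward shift gives every difference quotient at once:
`f_λ = (1 - λT)⁻¹ T f`, which is holomorphic in `λ ∈ 𝔻` as an `E`-valued map because `ρ(T) ≤ 1`.
Hence the division property at `λ` says exactly that `(S - λ)g ∈ M` implies `g ∈ M`.

The division property spreads from one point `z₀` to all of `𝔻` as soon as `Z(M) = ∅`.  For
`f, k ∈ M` the function `k(z) f - f(z) k` lies in `M` and vanishes at `z`, so its quotient `G(z)` by
`S - z` is holomorphic in `z` with `(S - z)G(z) ∈ M`.  Division at `z₀` puts `G(z₀)` in `M`, and the
difference quotient of `G` at `z₀` again satisfies `(S - z)G(z) ∈ M`; so, modulo `M`, `G` is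
divisible by every power of `z - z₀`, and therefore `G` takes values in `M`.  If `f(λ) = 0`, then
`G(λ) = k(λ) f_λ`, and `k` can be chosen with `k(λ) ≠ 0`.

At the origin, `M ∩ S(M)` is contained in the kernel of `f ↦ f(0)` on `M`, and the division
property at `0` says that the two coincide.  When evaluation at `0` is nonzero on `M`, this is the
condition `dim M/(M ∩ S(M)) = 1`.
-/

section Analytic

lemma eqOn_zero_of_forall_exists_eq_sub_smul {𝕜 F : Type*} [NontriviallyNormedField 𝕜]
    [NormedAddCommGroup F] [NormedSpace 𝕜 F] {U : Set 𝕜} (hU : IsOpen U) (hUc : IsPreconnected U)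
    {z₀ : 𝕜} (hz₀ : z₀ ∈ U) {𝒢 : Set (𝕜 → F)} (han : ∀ g ∈ 𝒢, AnalyticOnNhd 𝕜 g U)
    (hdiv : ∀ g ∈ 𝒢, ∃ h ∈ 𝒢, ∀ z ∈ U, g z = (z - z₀) • h z) {g : 𝕜 → F} (hg : g ∈ 𝒢) :
    EqOn g 0 U := by
  have hpow : ∀ n : ℕ, ∃ h ∈ 𝒢, ∀ z ∈ U, g z = (z - z₀) ^ n • h z := by
    intro n
    induction n with
    | zero => exact ⟨g, hg, fun z _ => by rw [pow_zero, one_smul]⟩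
    | succ n ih =>
      obtain ⟨h, hh, hgh⟩ := ih
      obtain ⟨k, hk, hhk⟩ := hdiv h hh
      exact ⟨k, hk, fun z hz => by rw [hgh z hz, hhk z hz, smul_smul, pow_succ]⟩
  have horder : analyticOrderAt g z₀ = ⊤ := by
    refine ENat.eq_top_iff_forall_ge.2 fun n => ?_
    obtain ⟨h, hh, hgh⟩ := hpow n
    exact (natCast_le_analyticOrderAt (han g hg z₀ hz₀)).2
      ⟨h, han h hh z₀ hz₀, eventually_of_mem (hU.mem_nhds hz₀) hgh⟩
  exact (han g hg).eqOn_zero_of_preconnected_of_eventuallyEq_zero hUc hz₀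
    (analyticOrderAt_eq_top.1 horder)

lemma apply_dslope_sub_smul_mem {𝕜 X : Type*} [NontriviallyNormedField 𝕜]
    [NormedAddCommGroup X] [NormedSpace 𝕜 X] {S : X →L[𝕜] X} {M : Submodule 𝕜 X}
    (hM : IsClosed (M : Set X)) {z₀ : 𝕜} {U : Set 𝕜} (hU : U ∈ 𝓝 z₀) {G : 𝕜 → X}
    (hG : DifferentiableAt 𝕜 G z₀) (hSG : ∀ z ∈ U, S (G z) - z • G z ∈ M) (hGz₀ : G z₀ ∈ M) :
    ∀ z ∈ U, S (dslope G z₀ z) - z • dslope G z₀ z ∈ M := by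
  have hne : ∀ z ∈ U, z ≠ z₀ → S (dslope G z₀ z) - z • dslope G z₀ z ∈ M := by
    intro z hz hzne
    have hsplit : S (dslope G z₀ z) - z • dslope G z₀ z = (z - z₀)⁻¹ •
        ((S (G z) - z • G z) - (S (G z₀) - z₀ • G z₀) + (z - z₀) • G z₀) := by
      rw [dslope_of_ne _ hzne, slope_def_module, map_smul, map_sub, smul_comm, ← smul_sub]
      congr 1
      module
    rw [hsplit]
    exact M.smul_mem _ (M.add_mem (M.sub_mem (hSG z hz) (hSG z₀ (mem_of_mem_nhds hU)))
      (M.smul_mem _ hGz₀))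
  intro z hz
  rcases ne_or_eq z z₀ with hzne | rfl
  · exact hne z hz hzne
  · have hcont : ContinuousAt (fun w => S (dslope G z w) - w • dslope G z w) z := by
      have := continuousAt_dslope_same.2 hG
      fun_prop
    refine hM.mem_of_tendsto (hcont.tendsto.mono_left (nhdsWithin_le_nhds (s := {z}ᶜ))) ?_
    filter_upwards [self_mem_nhdsWithin, mem_nhdsWithin_of_mem_nhds hU]
      with w hwne hw using hne w hw hwne

lemma mem_of_apply_sub_smul_mem {X : Type*} [NormedAddCommGroup X] [NormedSpace ℂ X]
    [CompleteSpace X] {S : X →L[ℂ] X} {M : Submodule ℂ X} (hM : IsClosed (M : Set X))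
    {U : Set ℂ} (hU : IsOpen U) (hUc : IsPreconnected U) {z₀ : ℂ} (hz₀ : z₀ ∈ U)
    (hdiv : ∀ x, S x - z₀ • x ∈ M → x ∈ M) {G : ℂ → X} (hG : DifferentiableOn ℂ G U)
    (hSG : ∀ z ∈ U, S (G z) - z • G z ∈ M) : ∀ z ∈ U, G z ∈ M := by
  let 𝒢 : Set (ℂ → X ⧸ M) :=
    {g | ∃ H : ℂ → X, DifferentiableOn ℂ H U ∧ (∀ z ∈ U, S (H z) - z • H z ∈ M) ∧
      g = fun z => M.mkQL (H z)}
  have han : ∀ g ∈ 𝒢, AnalyticOnNhd ℂ g U := by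
    rintro _ ⟨H, hH, -, rfl⟩
    exact M.mkQL.comp_analyticOnNhd (hH.analyticOnNhd hU)
  have hquot : ∀ g ∈ 𝒢, ∃ h ∈ 𝒢, ∀ z ∈ U, g z = (z - z₀) • h z := by
    rintro _ ⟨H, hH, hSH, rfl⟩
    have hz₀U : U ∈ 𝓝 z₀ := hU.mem_nhds hz₀
    have hHz₀ : H z₀ ∈ M := hdiv _ (hSH z₀ hz₀)
    have hd : DifferentiableOn ℂ (dslope H z₀) U :=
      (Complex.differentiableOn_dslope hz₀U).2 hH
    have hSd : ∀ z ∈ U, S (dslope H z₀ z) - z • dslope H z₀ z ∈ M :=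
      apply_dslope_sub_smul_mem hM hz₀U (hH.differentiableAt hz₀U) hSH hHz₀
    refine ⟨_, ⟨dslope H z₀, hd, hSd, rfl⟩, fun z _ => ?_⟩
    have hmk : M.mkQL (H z₀) = 0 := (Submodule.Quotient.mk_eq_zero M).2 hHz₀
    rw [← map_smul, sub_smul_dslope, map_sub, hmk, sub_zero]
  intro z hz
  exact (Submodule.Quotient.mk_eq_zero M).1
    (eqOn_zero_of_forall_exists_eq_sub_smul hU hUc hz₀ han hquot ⟨G, hG, hSG, rfl⟩ hz)

end Analytic

section Resolvent

variable {𝕜 A : Type*} [NontriviallyNormedField 𝕜] [NormedRing A] [NormedAlgebra 𝕜 A] {a : A}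

lemma isUnit_one_sub_smul_of_spectralRadius_le_one (ha : spectralRadius 𝕜 a ≤ 1) {z : 𝕜}
    (hz : z ∈ ball (0 : 𝕜) 1) : IsUnit (1 - z • a) := by
  refine spectrum.isUnit_one_sub_smul_of_lt_inv_radius
    (lt_of_lt_of_le ?_ (ENNReal.one_le_inv.2 ha))
  exact_mod_cast mem_ball_zero_iff.1 hz

lemma differentiableOn_inverse_one_sub_smul [CompleteSpace A] (ha : spectralRadius 𝕜 a ≤ 1) :
    DifferentiableOn 𝕜 (fun z : 𝕜 => Ring.inverse (1 - z • a)) (ball 0 1) := by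
  intro z hz
  have hinv : DifferentiableAt 𝕜 Ring.inverse (1 - z • a) :=
    differentiableAt_inverse (isUnit_one_sub_smul_of_spectralRadius_le_one ha hz)
  have hlin : DifferentiableAt 𝕜 (fun w : 𝕜 => 1 - w • a) z := by fun_prop
  exact (hinv.comp z hlin).differentiableWithinAt

end Resolvent

lemma rank_quotient_eq_one_iff_eq_ker {K V : Type*} [DivisionRing K] [AddCommGroup V] [Module K V]
    {φ : V →ₗ[K] K} (hφ : φ ≠ 0) {Q : Submodule K V} (hQ : Q ≤ LinearMap.ker φ) :
    Module.rank K (V ⧸ Q) = 1 ↔ Q = LinearMap.ker φ := by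
  have hsurj : Function.Surjective φ := LinearMap.surjective hφ
  constructor
  · intro hrank
    have hfin : Module.finrank K (V ⧸ Q) = 1 := Module.finrank_eq_of_rank_eq (by simpa using hrank)
    have : FiniteDimensional K (V ⧸ Q) := .of_finrank_eq_succ hfin
    have hlift : Function.Surjective (Q.liftQ φ hQ) := fun c =>
      (hsurj c).imp' Q.mkQ fun _ hv => hv
    have hinj : Function.Injective (Q.liftQ φ hQ) :=
      (LinearMap.injective_iff_surjective_of_finrank_eq_finrank
        (hfin.trans (Module.finrank_self K).symm)).2 hlift
    refine le_antisymm hQ fun v hv => (Submodule.Quotient.mk_eq_zero Q).1 (hinj ?_)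
    rw [map_zero]
    exact hv
  · rintro rfl
    simpa using (φ.quotKerEquivOfSurjective hsurj).lift_rank_eq

section DifferenceQuotient

variable {lam : ℂ} {f u : ℂ → ℂ}

lemma mul_fdivB (f : ℂ → ℂ) {z : ℂ} (hz : z ∈ ball (0 : ℂ) 1) :
    (z - lam) * fdivB lam f z = f z - f lam := by
  rw [fdivB, if_pos hz]
  split_ifs with h
  · rw [h, sub_self, sub_self, zero_mul]
  · exact mul_div_cancel₀ _ (sub_ne_zero.2 h)

lemma eq_fdivB_iff (hu : u ∈ HolDisc) :
    u = fdivB lam f ↔ ∀ z ∈ ball (0 : ℂ) 1, (z - lam) * u z = f z - f lam := by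
  refine ⟨fun h z hz => h ▸ mul_fdivB f hz, fun h => funext fun z => ?_⟩
  unfold fdivB
  split_ifs with hz hzl
  · subst hzl
    have hcont : ContinuousAt u z := hu.1.continuousOn.continuousAt (isOpen_ball.mem_nhds hz)
    refine (hasDerivAt_iff_tendsto_slope.2 ?_).deriv.symm
    refine (hcont.tendsto.mono_left nhdsWithin_le_nhds).congr' ?_
    filter_upwards [self_mem_nhdsWithin, mem_nhdsWithin_of_mem_nhds (isOpen_ball.mem_nhds hz)]
      with w hwne hw
    rw [slope_def_field, ← h w hw, mul_div_cancel_left₀ _ (sub_ne_zero.2 hwne)]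
  · rw [← h z hz, mul_div_cancel_left₀ _ (sub_ne_zero.2 hzl)]
  · exact hu.2 z hz

end DifferenceQuotient

section ShiftModel

variable {X : Type*} [NormedAddCommGroup X] [NormedSpace ℂ X]

/-- The injection `ι` realizes `X` as a space of holomorphic functions on the disc on which `S` and
`T` act as the shift and the backward shift. -/
structure IsShiftModel (ι : X →ₗ[ℂ] (ℂ → ℂ)) (S T : X →L[ℂ] X) : Prop where
  injective : Function.Injective ι
  mem_holDisc : ∀ f, ι f ∈ HolDisc
  shift : ∀ f, ι (S f) = shiftL (ι f)
  backwardShift : ∀ f, ι (T f) = fdivB 0 (ι f)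

/-- The division property of `M` at the point `lam`, for functions represented through `ι`. -/
def DivisionAt (ι : X →ₗ[ℂ] (ℂ → ℂ)) (M : Submodule ℂ X) (lam : ℂ) : Prop :=
  ∀ f ∈ M, ι f lam = 0 → ∃ g ∈ M, ι g = fdivB lam (ι f)

/-- The intersection `M ∩ S(M)`, as a subspace of `M`. -/
abbrev interShift (S : X →L[ℂ] X) (M : Submodule ℂ X) : Submodule ℂ M :=
  Submodule.comap M.subtype (M ⊓ Submodule.map S.toLinearMap M)

/-- Evaluation at `lam` on the functions in `M`. -/
def evalOn (ι : X →ₗ[ℂ] (ℂ → ℂ)) (M : Submodule ℂ X) (lam : ℂ) : M →ₗ[ℂ] ℂ :=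
  LinearMap.proj lam ∘ₗ ι ∘ₗ M.subtype

/-- The operator `(1 - lam T)⁻¹ T`, which sends `f` to its difference quotient `f_lam` when `T` is
the backward shift.  `Ring.inverse` makes it `0` where `1 - lam T` is not invertible. -/
def divOp (T : X →L[ℂ] X) (lam : ℂ) : X →L[ℂ] X :=
  Ring.inverse (1 - lam • T) * T

lemma divOp_sub_smul_apply {T : X →L[ℂ] X} {lam : ℂ} (h : IsUnit (1 - lam • T)) (f : X) :
    divOp T lam f - lam • T (divOp T lam f) = T f := by
  have hmul : (1 - lam • T) * divOp T lam = T := by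
    rw [divOp, Ring.mul_inverse_cancel_left _ _ h]
  exact DFunLike.congr_fun hmul f

lemma differentiableOn_divOp [CompleteSpace X] {T : X →L[ℂ] X} (hT : spectralRadius ℂ T ≤ 1) :
    DifferentiableOn ℂ (divOp T) (ball 0 1) :=
  (differentiableOn_inverse_one_sub_smul hT).mul_const T

namespace IsShiftModel

variable {ι : X →ₗ[ℂ] (ℂ → ℂ)} {S T : X →L[ℂ] X} {M : Submodule ℂ X} {lam : ℂ}

lemma eq_of_eqOn (hE : IsShiftModel ι S T) {f g : X} (h : EqOn (ι f) (ι g) (ball 0 1)) :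
    f = g := by
  refine hE.injective (funext fun z => ?_)
  by_cases hz : z ∈ ball (0 : ℂ) 1
  · exact h hz
  · rw [(hE.mem_holDisc f).2 z hz, (hE.mem_holDisc g).2 z hz]

lemma shift_sub_smul_apply (hE : IsShiftModel ι S T) (f : X) (lam z : ℂ) :
    ι (S f - lam • f) z = (z - lam) * ι f z := by
  rw [map_sub, map_smul, hE.shift]
  exact (sub_mul z lam (ι f z)).symm

lemma fdivB_shift_sub_smul (hE : IsShiftModel ι S T) (f : X) (lam : ℂ) :
    fdivB lam (ι (S f - lam • f)) = ι f := by
  refine ((eq_fdivB_iff (hE.mem_holDisc f)).2 fun z _ => ?_).symm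
  rw [hE.shift_sub_smul_apply, hE.shift_sub_smul_apply, sub_self, zero_mul, sub_zero]

lemma shift_sub_smul_eq_of_eq_fdivB (hE : IsShiftModel ι S T) {f g : X} (hf : ι f lam = 0)
    (hg : ι g = fdivB lam (ι f)) : S g - lam • g = f := by
  refine hE.eq_of_eqOn fun z hz => ?_
  rw [hE.shift_sub_smul_apply, hg, mul_fdivB (ι f) hz, hf, sub_zero]

lemma apply_divOp (hE : IsShiftModel ι S T) (hlam : lam ∈ ball (0 : ℂ) 1)
    (hunit : IsUnit (1 - lam • T)) (f : X) : ι (divOp T lam f) = fdivB lam (ι f) := by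
  set u := divOp T lam f
  have hu : ∀ z ∈ ball (0 : ℂ) 1, (z - lam) * ι u z = ι f z - (ι f 0 + lam * ι u 0) := by
    intro z hz
    have hres : ι u z - lam * fdivB 0 (ι u) z = fdivB 0 (ι f) z := by
      have := congrArg (fun x => ι x z) (divOp_sub_smul_apply hunit f)
      simpa only [map_sub, map_smul, hE.backwardShift, Pi.sub_apply, Pi.smul_apply, smul_eq_mul]
        using this
    have hTf := mul_fdivB (lam := 0) (ι f) hz
    have hTu := mul_fdivB (lam := 0) (ι u) hz
    linear_combination z * hres + hTf + lam * hTu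
  have hconst := hu lam hlam
  refine (eq_fdivB_iff (hE.mem_holDisc u)).2 fun z hz => ?_
  linear_combination hu z hz - hconst

lemma shift_sub_smul_divOp (hE : IsShiftModel ι S T) (hlam : lam ∈ ball (0 : ℂ) 1)
    (hunit : IsUnit (1 - lam • T)) {f : X} (hf : ι f lam = 0) :
    S (divOp T lam f) - lam • divOp T lam f = f :=
  hE.shift_sub_smul_eq_of_eq_fdivB hf (hE.apply_divOp hlam hunit f)

lemma mem_of_shift_sub_smul_mem (hE : IsShiftModel ι S T) (hdiv : DivisionAt ι M lam) {g : X}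
    (hg : S g - lam • g ∈ M) : g ∈ M := by
  obtain ⟨h, hhM, hh⟩ := hdiv _ hg (by rw [hE.shift_sub_smul_apply, sub_self, zero_mul])
  rw [hE.fdivB_shift_sub_smul] at hh
  exact hE.injective hh ▸ hhM

lemma divisionAt_of_divisionAt [CompleteSpace X] (hE : IsShiftModel ι S T)
    (hT : spectralRadius ℂ T ≤ 1) (hM : IsClosed (M : Set X)) {z₀ : ℂ}
    (hz₀ : z₀ ∈ ball (0 : ℂ) 1) (hdiv : DivisionAt ι M z₀) (hlam : lam ∈ ball (0 : ℂ) 1)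
    (hk : ∃ k ∈ M, ι k lam ≠ 0) : DivisionAt ι M lam := by
  intro f hf hflam
  obtain ⟨k, hkM, hklam⟩ := hk
  have hunit : ∀ z ∈ ball (0 : ℂ) 1, IsUnit (1 - z • T) := fun z hz =>
    isUnit_one_sub_smul_of_spectralRadius_le_one hT hz
  let G : ℂ → X := fun z => divOp T z (ι k z • f - ι f z • k)
  have hG : DifferentiableOn ℂ G (ball 0 1) :=
    (differentiableOn_divOp hT).clm_apply
      (((hE.mem_holDisc k).1.smul_const f).sub ((hE.mem_holDisc f).1.smul_const k))
  have hSG : ∀ z ∈ ball (0 : ℂ) 1, S (G z) - z • G z ∈ M := by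
    intro z hz
    have hvanish : ι (ι k z • f - ι f z • k) z = 0 := by
      rw [map_sub, map_smul, map_smul]
      exact sub_eq_zero.2 (mul_comm _ _)
    rw [hE.shift_sub_smul_divOp hz (hunit z hz) hvanish]
    exact M.sub_mem (M.smul_mem _ hf) (M.smul_mem _ hkM)
  have hGlam : G lam ∈ M :=
    mem_of_apply_sub_smul_mem hM isOpen_ball (convex_ball 0 1).isPreconnected hz₀
      (fun _ => hE.mem_of_shift_sub_smul_mem hdiv) hG hSG lam hlam
  have hquot : G lam = ι k lam • divOp T lam f := by
    simp only [G, hflam, zero_smul, sub_zero, map_smul]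
  rw [hquot, M.smul_mem_iff hklam] at hGlam
  exact ⟨_, hGlam, hE.apply_divOp hlam (hunit lam hlam) f⟩

lemma exists_apply_ne_zero_of_divisionAt (hE : IsShiftModel ι S T) (hM0 : M ≠ ⊥)
    (hlam : lam ∈ ball (0 : ℂ) 1) (hdiv : DivisionAt ι M lam) : ∃ f ∈ M, ι f lam ≠ 0 := by
  by_contra! hzero
  have han : ∀ g ∈ ι '' M, AnalyticOnNhd ℂ g (ball 0 1) := by
    rintro _ ⟨f, -, rfl⟩
    exact (hE.mem_holDisc f).1.analyticOnNhd isOpen_ball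
  have hquot : ∀ g ∈ ι '' M, ∃ h ∈ ι '' M, ∀ z ∈ ball (0 : ℂ) 1, g z = (z - lam) • h z := by
    rintro _ ⟨f, hf, rfl⟩
    obtain ⟨h, hhM, hh⟩ := hdiv f hf (hzero f hf)
    refine ⟨ι h, ⟨h, hhM, rfl⟩, fun z hz => ?_⟩
    rw [smul_eq_mul, hh, mul_fdivB (ι f) hz, hzero f hf, sub_zero]
  refine hM0 ((Submodule.eq_bot_iff M).2 fun f hf => hE.eq_of_eqOn ?_)
  rw [map_zero]
  exact eqOn_zero_of_forall_exists_eq_sub_smul isOpen_ball (convex_ball 0 1).isPreconnected hlam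
    han hquot ⟨f, hf, rfl⟩

lemma interShift_le_ker_evalOn (hE : IsShiftModel ι S T) :
    interShift S M ≤ LinearMap.ker (evalOn ι M 0) := by
  rintro ⟨_, _⟩ ⟨-, g, -, rfl⟩
  change ι (S g) 0 = 0
  rw [hE.shift]
  exact zero_mul (ι g 0)

lemma interShift_eq_ker_evalOn_iff (hE : IsShiftModel ι S T) :
    interShift S M = LinearMap.ker (evalOn ι M 0) ↔ DivisionAt ι M 0 := by
  constructor
  · intro heq f hf hf0
    have hfker : (⟨f, hf⟩ : M) ∈ LinearMap.ker (evalOn ι M 0) := hf0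
    rw [← heq] at hfker
    obtain ⟨-, g, hg, rfl⟩ := hfker
    have hfdivB := hE.fdivB_shift_sub_smul g 0
    rw [zero_smul, sub_zero] at hfdivB
    exact ⟨g, hg, hfdivB.symm⟩
  · intro hdiv
    refine le_antisymm hE.interShift_le_ker_evalOn fun ⟨f, hf⟩ hf0 => ?_
    have hf0 : ι f 0 = 0 := hf0
    obtain ⟨g, hg, hgf⟩ := hdiv f hf hf0
    have hSg : S g = f := by
      simpa only [zero_smul, sub_zero] using hE.shift_sub_smul_eq_of_eq_fdivB hf0 hgf
    exact ⟨hf, g, hg, hSg⟩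

lemma rank_quotient_interShift_eq_one_iff (hE : IsShiftModel ι S T)
    (hk : ∃ k ∈ M, ι k 0 ≠ 0) :
    Module.rank ℂ (M ⧸ interShift S M) = 1 ↔ DivisionAt ι M 0 := by
  obtain ⟨k, hkM, hk0⟩ := hk
  have heval : evalOn ι M 0 ≠ 0 := fun h => hk0 (LinearMap.congr_fun h ⟨k, hkM⟩)
  rw [rank_quotient_eq_one_iff_eq_ker heval hE.interShift_le_ker_evalOn,
    hE.interShift_eq_ker_evalOn_iff]

end IsShiftModel

end ShiftModel

theorem statement9_general
    {X : Type*} [NormedAddCommGroup X] [NormedSpace ℂ X] [CompleteSpace X]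
    (ι : X →ₗ[ℂ] (ℂ → ℂ)) (hinj : Function.Injective ι)
    (hhol : ∀ f : X, ι f ∈ HolDisc)
    (Sb Tb : X →L[ℂ] X)
    (hSb : ∀ f : X, ι (Sb f) = shiftL (ι f))
    (hTb : ∀ f : X, ι (Tb f) = fdivB 0 (ι f))
    (hTrad : spectralRadius ℂ Tb ≤ 1)
    (M : Submodule ℂ X) (hMc : IsClosed (M : Set X)) (hM0 : M ≠ ⊥) :
    (∀ f ∈ M, ∀ lam ∈ Metric.ball (0:ℂ) 1,
        ι f lam = 0 → ∃ g ∈ M, ι g = fdivB lam (ι f))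
    ↔ ((∀ lam ∈ Metric.ball (0:ℂ) 1, ∃ f ∈ M, ι f lam ≠ 0)
        ∧ Module.rank ℂ
            (↥M ⧸ Submodule.comap M.subtype (M ⊓ Submodule.map Sb.toLinearMap M)) = 1) := by
  have hE : IsShiftModel ι Sb Tb := ⟨hinj, hhol, hSb, hTb⟩
  have h0 : (0 : ℂ) ∈ ball (0 : ℂ) 1 := mem_ball_self one_pos
  constructor
  · intro hdiv
    have hdivAt : ∀ lam ∈ ball (0 : ℂ) 1, DivisionAt ι M lam := fun lam hlam f hf =>
      hdiv f hf lam hlam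
    have hZ : ∀ lam ∈ ball (0 : ℂ) 1, ∃ f ∈ M, ι f lam ≠ 0 := fun lam hlam =>
      hE.exists_apply_ne_zero_of_divisionAt hM0 hlam (hdivAt lam hlam)
    exact ⟨hZ, (hE.rank_quotient_interShift_eq_one_iff (hZ 0 h0)).2 (hdivAt 0 h0)⟩
  · rintro ⟨hZ, hrank⟩ f hf lam hlam
    have hdiv0 : DivisionAt ι M 0 := (hE.rank_quotient_interShift_eq_one_iff (hZ 0 h0)).1 hrank
    exact hE.divisionAt_of_divisionAt hTrad hMc h0 hdiv0 hlam (hZ lam hlam) f hf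

/-- (Corollary 3.5) A nonzero closed subspace `M` of `E ∈ 𝓔` has the
division property iff `Z(M) = ∅` and `dim M/(M ∩ S(M)) = 1`. -/
theorem statement9
    {X : Type*} [NormedAddCommGroup X] [NormedSpace ℂ X] [CompleteSpace X]
    (ι : X →ₗ[ℂ] (ℂ → ℂ)) (hinj : Function.Injective ι)
    (hhol : ∀ f : X, ι f ∈ HolDisc)
    (Sb Tb : X →L[ℂ] X)
    (hSb : ∀ f : X, ι (Sb f) = shiftL (ι f))
    (hTb : ∀ f : X, ι (Tb f) = fdivB 0 (ι f))
    (hSrad : spectralRadius ℂ Sb ≤ 1) (hTrad : spectralRadius ℂ Tb ≤ 1)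
    (M : Submodule ℂ X) (hMc : IsClosed (M : Set X)) (hM0 : M ≠ ⊥) :
    (∀ f ∈ M, ∀ lam ∈ Metric.ball (0:ℂ) 1,
        ι f lam = 0 → ∃ g ∈ M, ι g = fdivB lam (ι f))
    ↔ ((∀ lam ∈ Metric.ball (0:ℂ) 1, ∃ f ∈ M, ι f lam ≠ 0)
        ∧ Module.rank ℂ
            (↥M ⧸ Submodule.comap M.subtype (M ⊓ Submodule.map Sb.toLinearMap M)) = 1) :=
  statement9_general ι hinj hhol Sb Tb hSb hTb hTrad M hMc hM0
end
end
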